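/- Let r₁ be the rank function of U^{123}_{2,3} and r₂ the rank function of U^{1}_{1,1} on N_4. For every positive integer k and every b ≥ 0, the function h = (log k)·r₁ + b·r₂ is an entropy function of degree 4. -/

import Mathlib

open Finset

/-- Probability that the discrete random variable `Y` (on finite sample space `Ω`
with pmf `p`) takes the value `s`. -/
noncomputable def pr {Ω : Type} [Fintype Ω] {S : Type} [DecidableEq S]
    (p : Ω → ℝ) (Y : Ω → S) (s : S) : ℝ := ∑ ω, if Y ω = s then p ω else 0

/-- Shannon entropy (base 2) of the discrete random variable `Y`. -/
noncomputable def ent {Ω : Type} [Fintype Ω] {S : Type} [DecidableEq S]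
    (p : Ω → ℝ) (Y : Ω → S) : ℝ :=
  - ∑ s ∈ Finset.univ.image Y, pr p Y s * Real.logb 2 (pr p Y s)

/-- `h : 2^{N_n} → ℝ` is entropic: it is the entropy function of some random
vector `(X_1, …, X_n)` on finite alphabets. -/
def IsEntropic (n : ℕ) (h : Finset (Fin n) → ℝ) : Prop :=
  ∃ (m : Fin n → ℕ) (p : (∀ i, Fin (m i)) → ℝ),
    (∀ x, 0 ≤ p x) ∧ (∑ x, p x) = 1 ∧
    ∀ A : Finset (Fin n), h A = ent p (fun x (i : A) => x i.1)

/-- Rank function of the matroid U^{B}_{k,|B|} on N₄ = {0,1,2,3}: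
A ↦ min(k, |A ∩ B|); elements outside B are loops. -/
noncomputable def rkU (k : ℕ) (B : Finset (Fin 4)) (A : Finset (Fin 4)) : ℝ :=
  min (k : ℝ) ((A ∩ B).card : ℝ)

/-!
Entropic functions are closed under addition, by concatenating independent random vectors, so the
two summands can be treated separately. Three letters of a finite abelian group which sum to zero
and are otherwise uniform give `log k` times the rank function of `U_{2,3}`: any two letters are
independent and uniform, and they determine the third. One random variable of entropy `b`, with the
remaining coordinates constant, gives `b` times the rank function of `U_{1,1}`; it exists because
entropy is continuous on the simplex and takes the values `0` and `log N` on `N` points.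
-/

section Entropy

variable {Ω Ω' S S' : Type} [Fintype Ω] [Fintype Ω'] [DecidableEq S] [DecidableEq S']

lemma sum_pr_mul {p : Ω → ℝ} {Y : Ω → S} {T : Finset S} (hT : ∀ ω, Y ω ∈ T) (g : S → ℝ) :
    ∑ s ∈ T, pr p Y s * g s = ∑ ω, p ω * g (Y ω) := by
  simp_rw [pr, sum_mul, ite_mul, zero_mul]
  rw [sum_comm]
  exact sum_congr rfl fun ω _ => by rw [sum_ite_eq, if_pos (hT ω)]

lemma ent_eq_neg_sum_mul_logb (p : Ω → ℝ) (Y : Ω → S) :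
    ent p Y = -∑ ω, p ω * Real.logb 2 (pr p Y (Y ω)) := by
  rw [ent, sum_pr_mul (fun ω => mem_image_of_mem Y (mem_univ ω)) fun s => Real.logb 2 (pr p Y s)]

lemma pr_mem_stdSimplex [Fintype S] {p : Ω → ℝ} (hp : p ∈ stdSimplex ℝ Ω) (Y : Ω → S) :
    pr p Y ∈ stdSimplex ℝ S := by
  refine ⟨fun s => sum_nonneg fun ω _ => ?_, ?_⟩
  · split_ifs
    exacts [hp.1 ω, le_rfl]
  · simpa [hp.2] using sum_pr_mul (p := p) (Y := Y) (fun ω => mem_univ _) 1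

lemma le_pr_apply {p : Ω → ℝ} (hp : ∀ ω, 0 ≤ p ω) (Y : Ω → S) (ω : Ω) : p ω ≤ pr p Y (Y ω) := by
  rw [pr, ← sum_filter]
  exact single_le_sum (fun ω' _ => hp ω') (by simp)

lemma pr_pr (p : Ω → ℝ) (Y : Ω → S) [Fintype S] (Z : S → S') :
    pr (pr p Y) Z = pr p (Z ∘ Y) := by
  ext s
  simpa [pr] using
    sum_pr_mul (p := p) (Y := Y) (fun ω => mem_univ _) fun t => if Z t = s then 1 else 0

lemma ent_pr (p : Ω → ℝ) (Y : Ω → S) [Fintype S] (Z : S → S') :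
    ent (pr p Y) Z = ent p (Z ∘ Y) := by
  rw [ent_eq_neg_sum_mul_logb, ent_eq_neg_sum_mul_logb, pr_pr,
    sum_pr_mul (fun ω => mem_univ _) fun t => Real.logb 2 (pr p (Z ∘ Y) (Z t))]
  rfl

lemma ent_congr (p : Ω → ℝ) {Y : Ω → S} {Z : Ω → S'} (h : ∀ ω ω', Y ω = Y ω' ↔ Z ω = Z ω') :
    ent p Y = ent p Z := by
  simp_rw [ent_eq_neg_sum_mul_logb, pr, h]

lemma ent_const {p : Ω → ℝ} (hp : p ∈ stdSimplex ℝ Ω) (s : S) : ent p (fun _ => s) = 0 := by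
  simp [ent_eq_neg_sum_mul_logb, pr, hp.2]

lemma ent_id [DecidableEq Ω] (p : Ω → ℝ) : ent p id = ∑ ω, Real.negMulLog (p ω) / Real.log 2 := by
  simp [ent, pr, Real.negMulLog, Real.logb, neg_div, mul_div_assoc]

lemma prod_mem_stdSimplex {p : Ω → ℝ} {q : Ω' → ℝ} (hp : p ∈ stdSimplex ℝ Ω)
    (hq : q ∈ stdSimplex ℝ Ω') : (fun x : Ω × Ω' => p x.1 * q x.2) ∈ stdSimplex ℝ (Ω × Ω') :=
  ⟨fun x => mul_nonneg (hp.1 x.1) (hq.1 x.2), by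
    rw [Fintype.sum_prod_type, ← Fintype.sum_mul_sum, hp.2, hq.2, one_mul]⟩

lemma pr_prodMap (p : Ω → ℝ) (q : Ω' → ℝ) (Y : Ω → S) (Z : Ω' → S') (s : S × S') :
    pr (fun x : Ω × Ω' => p x.1 * q x.2) (Prod.map Y Z) s = pr p Y s.1 * pr q Z s.2 := by
  simp_rw [pr, Fintype.sum_mul_sum, Fintype.sum_prod_type, Prod.map_apply, Prod.ext_iff,
    ite_and, mul_ite, ite_mul, mul_zero, zero_mul]
  exact sum_congr rfl fun _ _ => sum_congr rfl fun _ _ => by split_ifs <;> rfl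

lemma ent_prodMap {p : Ω → ℝ} {q : Ω' → ℝ} (hp : p ∈ stdSimplex ℝ Ω) (hq : q ∈ stdSimplex ℝ Ω')
    (Y : Ω → S) (Z : Ω' → S') :
    ent (fun x : Ω × Ω' => p x.1 * q x.2) (Prod.map Y Z) = ent p Y + ent q Z := by
  have logb_pr_mul (x : Ω × Ω') :
      p x.1 * q x.2 * Real.logb 2 (pr p Y (Y x.1) * pr q Z (Z x.2)) =
        p x.1 * Real.logb 2 (pr p Y (Y x.1)) * q x.2 +
          p x.1 * (q x.2 * Real.logb 2 (pr q Z (Z x.2))) := by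
    rcases (hp.1 x.1).eq_or_lt with hpx | hpx
    · simp [← hpx]
    rcases (hq.1 x.2).eq_or_lt with hqx | hqx
    · simp [← hqx]
    rw [Real.logb_mul (hpx.trans_le (le_pr_apply hp.1 Y x.1)).ne'
      (hqx.trans_le (le_pr_apply hq.1 Z x.2)).ne']
    ring
  simp_rw [ent_eq_neg_sum_mul_logb, pr_prodMap, Prod.map_fst, Prod.map_snd, logb_pr_mul,
    sum_add_distrib, Fintype.sum_prod_type, ← Fintype.sum_mul_sum, hp.2, hq.2]
  ring

end Entropy

section Uniform

/-- The law of `f` is uniform because it is invariant under translation. -/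
lemma ent_barycenter_of_surjective {G H : Type} [AddGroup G] [Fintype G] [AddGroup H] [Fintype H]
    [DecidableEq H] {f : G →+ H} (hf : Function.Surjective f) :
    ent (stdSimplex.barycenter : stdSimplex ℝ G).1 f = Real.logb 2 (Fintype.card H) := by
  set u : stdSimplex ℝ G := stdSimplex.barycenter
  have pr_eq_pr_zero (s : H) : pr u.1 f s = pr u.1 f 0 := by
    obtain ⟨g, rfl⟩ := hf s
    have translate_iff (x : G) : -f g + f x = 0 ↔ f x = f g := by
      rw [neg_add_eq_zero, eq_comm]
    exact Fintype.sum_equiv (Equiv.addLeft (-g)) _ _ fun x => by simp [u, translate_iff]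
  have card_mul_pr : Fintype.card H * pr u.1 f 0 = 1 := by
    simpa [pr_eq_pr_zero] using (pr_mem_stdSimplex u.2 f).2
  simp_rw [ent_eq_neg_sum_mul_logb, pr_eq_pr_zero, ← sum_mul, u.2.2,
    eq_inv_of_mul_eq_one_right card_mul_pr, Real.logb_inv, one_mul, neg_neg]

lemma exists_mem_stdSimplex_ent_id_eq {b : ℝ} (hb : 0 ≤ b) :
    ∃ (N : ℕ) (q : Fin N → ℝ), q ∈ stdSimplex ℝ (Fin N) ∧ ent q id = b := by
  obtain ⟨N, hN⟩ := exists_nat_gt ((2 : ℝ) ^ b)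
  have hN_pos : (0 : ℝ) < N := (Real.rpow_pos_of_pos two_pos b).trans hN
  have : NeZero N := ⟨by exact_mod_cast hN_pos.ne'⟩
  have ent_continuous : Continuous fun q : Fin N → ℝ => ent q id := by
    simp_rw [ent_id]
    fun_prop
  have ent_vertex : ent (Pi.single (0 : Fin N) (1 : ℝ)) id = 0 := by
    rw [ent_id]
    refine sum_eq_zero fun i _ => ?_
    rcases eq_or_ne i 0 with rfl | hi <;> simp [*]
  have ent_barycenter :
      ent (stdSimplex.barycenter : stdSimplex ℝ (Fin N)).1 id = Real.logb 2 N := by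
    simp only [ent_id, stdSimplex.barycenter_apply, Fintype.card_fin, Real.negMulLog, Real.log_inv,
      neg_mul_neg, sum_const, card_univ, nsmul_eq_mul, Real.logb]
    field_simp
  have hbN : b ≤ Real.logb 2 N := (Real.le_logb_iff_rpow_le one_lt_two hN_pos).2 hN.le
  obtain ⟨q, hq, hqb⟩ := (convex_stdSimplex ℝ (Fin N)).isPreconnected.intermediate_value
    (single_mem_stdSimplex ℝ 0) stdSimplex.barycenter.2 ent_continuous.continuousOn
    ⟨ent_vertex.trans_le hb, hbN.trans_eq ent_barycenter.symm⟩
  exact ⟨N, q, hq, hqb⟩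

end Uniform

section Entropic

variable {n : ℕ}

lemma isEntropic_ent {Ω : Type} [Fintype Ω] {S : Fin n → Type} [∀ i, Finite (S i)]
    [∀ i, DecidableEq (S i)] {p : Ω → ℝ} (hp : p ∈ stdSimplex ℝ Ω) (X : Ω → ∀ i, S i) :
    IsEntropic n fun A => ent p fun ω (i : A) => X ω i := by
  let encode (ω : Ω) (i : Fin n) : Fin (Nat.card (S i)) := Finite.equivFin (S i) (X ω i)
  obtain ⟨nonneg, sum_eq_one⟩ := pr_mem_stdSimplex hp encode
  refine ⟨_, pr p encode, nonneg, sum_eq_one, fun A => ?_⟩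
  rw [ent_pr]
  exact ent_congr p fun ω ω' => by simp [encode, funext_iff]

lemma IsEntropic.add {h₁ h₂ : Finset (Fin n) → ℝ} (hh₁ : IsEntropic n h₁) (hh₂ : IsEntropic n h₂) :
    IsEntropic n fun A => h₁ A + h₂ A := by
  obtain ⟨m₁, p₁, nonneg₁, sum₁, ent₁⟩ := hh₁
  obtain ⟨m₂, p₂, nonneg₂, sum₂, ent₂⟩ := hh₂
  have hp₁ : p₁ ∈ stdSimplex ℝ _ := ⟨nonneg₁, sum₁⟩
  have hp₂ : p₂ ∈ stdSimplex ℝ _ := ⟨nonneg₂, sum₂⟩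
  convert isEntropic_ent (prod_mem_stdSimplex hp₁ hp₂) fun x i => (x.1 i, x.2 i) using 2 with A
  rw [ent₁, ent₂, ← ent_prodMap hp₁ hp₂]
  exact ent_congr _ fun x y => by simp [Prod.ext_iff, funext_iff, forall_and]

lemma isEntropic_mul_min_one_card_inter {b : ℝ} (hb : 0 ≤ b) (C : Finset (Fin n)) :
    IsEntropic n fun A => b * min 1 (#(A ∩ C) : ℝ) := by
  obtain ⟨N, q, hq, hqb⟩ := exists_mem_stdSimplex_ent_id_eq hb
  convert isEntropic_ent hq fun t i => if i ∈ C then some t else none using 2 with A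
  rcases (A ∩ C).eq_empty_or_nonempty with hAC | hAC
  · have not_mem (i : A) : i.1 ∉ C := disjoint_left.1 (disjoint_iff_inter_eq_empty.2 hAC) i.2
    simp [hAC, not_mem, ent_const hq]
  · obtain ⟨i, hi⟩ := hAC
    have one_le_card : (1 : ℝ) ≤ #(A ∩ C) := by exact_mod_cast card_pos.2 ⟨i, hi⟩
    rw [min_eq_left one_le_card, mul_one, ← hqb]
    refine ent_congr q fun t t' => ⟨?_, fun h => ?_⟩
    · rintro rfl
      rfl
    · simpa [(mem_inter.1 hi).2] using congrFun h ⟨i, (mem_inter.1 hi).1⟩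

end Entropic

section ZeroSum

variable {ι V : Type*} [AddCommGroup V] {A B D : Finset ι}

/-- The parity-check code: words supported on `B` whose entries sum to zero. Its uniform codeword
replaces, up to the sign of `X₃'`, the vector `(X₁', X₂', X₁' + X₂')` by one which is symmetric in
the coordinates. -/
def zeroSumCode (V : Type*) [AddCommGroup V] (B : Finset ι) : AddSubgroup (ι → V) where
  carrier := {x | (∀ i ∉ B, x i = 0) ∧ ∑ i ∈ B, x i = 0}
  zero_mem' := by simp
  add_mem' hx hy := ⟨fun i hi => by simp [hx.1 i hi, hy.1 i hi],
    by simp [sum_add_distrib, hx.2, hy.2]⟩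
  neg_mem' hx := ⟨fun i hi => by simp [hx.1 i hi], by simp [hx.2]⟩

/-- The restriction of codewords of `zeroSumCode V B` to the coordinates in `A`. -/
def zeroSumCode.restrict (V : Type*) [AddCommGroup V] (B A : Finset ι) :
    zeroSumCode V B →+ (A → V) where
  toFun x i := x.1 i
  map_zero' := rfl
  map_add' _ _ := rfl

lemma zeroSumCode.restrict_surjective (hD : D ⊂ B) :
    Function.Surjective (zeroSumCode.restrict V B D) := by
  classical
  intro y
  obtain ⟨j, hjB, hjD⟩ := exists_of_ssubset hD
  let z (i : ι) : V := if hi : i ∈ D then y ⟨i, hi⟩ else 0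
  refine ⟨⟨z - Pi.single j (∑ i ∈ B, z i), fun i hi => ?_, ?_⟩, ?_⟩
  · have hij : i ≠ j := fun hij => hi (hij ▸ hjB)
    have hiD : i ∉ D := fun hiD => hi (hD.1 hiD)
    simp [z, hij, hiD]
  · simp [Pi.single_apply, hjB]
  · ext ⟨i, hi⟩
    have hij : i ≠ j := fun hij => hjD (hij ▸ hi)
    simp [zeroSumCode.restrict, z, hi, hij]

variable [DecidableEq ι]

lemma zeroSumCode.restrict_eq_iff_restrict_inter_eq (x y : zeroSumCode V B) :
    restrict V B A x = restrict V B A y ↔ restrict V B (A ∩ B) x = restrict V B (A ∩ B) y := by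
  simp only [restrict, AddMonoidHom.coe_mk, ZeroHom.coe_mk, funext_iff, Subtype.forall, mem_inter]
  refine ⟨fun h i hi => h i hi.1, fun h i hi => ?_⟩
  by_cases hiB : i ∈ B
  · exact h i ⟨hi, hiB⟩
  · rw [x.2.1 i hiB, y.2.1 i hiB]

lemma zeroSumCode.restrict_erase_eq_iff {j : ι} (hj : j ∈ B) (x y : zeroSumCode V B) :
    restrict V B (B.erase j) x = restrict V B (B.erase j) y ↔
      restrict V B B x = restrict V B B y := by
  simp only [restrict, AddMonoidHom.coe_mk, ZeroHom.coe_mk, funext_iff, Subtype.forall, mem_erase]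
  refine ⟨fun h i hi => ?_, fun h i hi => h i hi.2⟩
  have sum_erase_eq : ∑ i ∈ B.erase j, x.1 i = ∑ i ∈ B.erase j, y.1 i :=
    sum_congr rfl fun i hi => h i (mem_erase.1 hi)
  rcases eq_or_ne i j with rfl | hij
  · refine add_right_cancel (b := ∑ i ∈ B.erase i, x.1 i) ?_
    rw [add_sum_erase B x.1 hj, sum_erase_eq, add_sum_erase B y.1 hj, x.2.2, y.2.2]
  · exact h i ⟨hij, hi⟩

end ZeroSum

section ZeroSumEntropy

variable {ι V : Type} [AddCommGroup V] [Fintype V] [DecidableEq V] {B D : Finset ι}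
  [Fintype (zeroSumCode V B)]

lemma ent_zeroSumCode_restrict_of_ssubset (hD : D ⊂ B) :
    ent (stdSimplex.barycenter : stdSimplex ℝ (zeroSumCode V B)).1 (zeroSumCode.restrict V B D) =
      #D * Real.logb 2 (Fintype.card V) := by
  classical
  rw [ent_barycenter_of_surjective (zeroSumCode.restrict_surjective hD)]
  simp [Real.logb_pow]

lemma ent_zeroSumCode_restrict [DecidableEq ι] (hB : B.Nonempty) (A : Finset ι) :
    ent (stdSimplex.barycenter : stdSimplex ℝ (zeroSumCode V B)).1 (zeroSumCode.restrict V B A) =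
      Real.logb 2 (Fintype.card V) * min (#B - 1 : ℝ) #(A ∩ B) := by
  rw [ent_congr _ zeroSumCode.restrict_eq_iff_restrict_inter_eq, mul_comm]
  rcases (inter_subset_right : A ∩ B ⊆ B).eq_or_ssubset with hAB | hAB
  · obtain ⟨j, hj⟩ := hB
    rw [hAB, ← ent_congr _ (zeroSumCode.restrict_erase_eq_iff hj),
      ent_zeroSumCode_restrict_of_ssubset (erase_ssubset hj), cast_card_erase_of_mem hj,
      min_eq_left (sub_le_self _ zero_le_one)]
  · have card_le : (#(A ∩ B) : ℝ) ≤ #B - 1 := by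
      rw [le_sub_iff_add_le]
      exact_mod_cast card_lt_card hAB
    rw [ent_zeroSumCode_restrict_of_ssubset hAB, min_eq_right card_le]

end ZeroSumEntropy

lemma isEntropic_logb_card_mul_min_card_inter {n : ℕ} (V : Type) [AddCommGroup V] [Fintype V]
    {B : Finset (Fin n)} (hB : B.Nonempty) :
    IsEntropic n fun A => Real.logb 2 (Fintype.card V) * min (#B - 1 : ℝ) #(A ∩ B) := by
  classical
  convert isEntropic_ent (stdSimplex.barycenter : stdSimplex ℝ (zeroSumCode V B)).2 Subtype.val
    using 2 with A
  exact (ent_zeroSumCode_restrict hB A).symm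

/-- For every positive integer k and every b ≥ 0, the function
h = (log₂ k)·r(U^{123}_{2,3}) + b·r(U^{1}_{1,1}) is entropic. (If part of
Theorem 3 for the face (U^{123}_{2,3}, U^{1}_{1,1}).) -/
theorem face_U123_23_U1_11_if (k : ℕ) (hk : 0 < k) (b : ℝ) (hb : 0 ≤ b) :
    IsEntropic 4
      (fun A => Real.logb 2 k * rkU 2 ({0,1,2} : Finset (Fin 4)) A +
                b * rkU 1 ({0} : Finset (Fin 4)) A) := by
  have : NeZero k := ⟨hk.ne'⟩
  have rkU_two (A) : rkU 2 {0, 1, 2} A = min (#{0, 1, 2} - 1 : ℝ) #(A ∩ {0, 1, 2}) := by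
    norm_num [rkU]
  have rkU_one (A) : rkU 1 {0} A = min 1 (#(A ∩ {0}) : ℝ) := by rw [rkU, Nat.cast_one]
  simp_rw [rkU_two, rkU_one]
  rw [← ZMod.card k]
  exact (isEntropic_logb_card_mul_min_card_inter (ZMod k) (insert_nonempty 0 {1, 2})).add
    (isEntropic_mul_min_one_card_inter hb {0})
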